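/- Let G be the complete multipartite graph K_{r_1·n_1,…,r_s·n_s} of order n = ∑_{i=1}^s r_i n_i with exactly r_i parts of size n_i (the n_i pairwise distinct), and k = ∑_{i=1}^s r_i. Then S_G(λ) = (λ+1)^{n−k} ∏_{i=1}^{s} (λ+1−2n_i)^{r_i−1} ( λ^s + ∑_{m=1}^{s} ∑_{i=0}^{m} (−1)^{i−1} 2^{i−1} C(s−i, m−i) ( ∑_{l=1}^{s} r_l σ_{l,i} − 2σ_i ) λ^{s−m} ), where σ_0 = 1, σ_{l,0} = 0, σ_{l,1} = n_l, σ_i = ∑_{1 ≤ j_1 < ⋯ < j_i ≤ s} n_{j_1} ⋯ n_{j_i}, and σ_{l,i} = ∑ n_l n_{j_1} ⋯ n_{j_{i−1}} where the sum runs over 1 ≤ j_1 < ⋯ < j_{i−1} ≤ s with all j_t ≠ l, for l, i = 1,…,s. -/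

import Mathlib

open Polynomial Matrix Finset SimpleGraph

/- The Seidel matrix `S(G) = J - I - 2A(G)` of a simple graph `G`. -/
open scoped Classical in
noncomputable def seidelMatrix {V : Type*} [Fintype V] [DecidableEq V]
    (G : SimpleGraph V) : Matrix V V ℝ :=
  (Matrix.of fun _ _ => (1 : ℝ)) - 1 - 2 • G.adjMatrix ℝ

/-- `σ_i`, the `i`-th elementary symmetric polynomial in `n 0, …, n (s-1)`
(`σ_0 = 1`). -/
noncomputable def esym {s : ℕ} (n : Fin s → ℕ) (i : ℕ) : ℝ :=
  ∑ t ∈ Finset.powersetCard i (Finset.univ : Finset (Fin s)), ∏ j ∈ t, (n j : ℝ)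

/-- `σ_{l,i} = ∑ n_l n_{j_1} ⋯ n_{j_{i-1}}`, the sum running over
`1 ≤ j_1 < ⋯ < j_{i-1} ≤ s` with all `j_t ≠ l`; and `σ_{l,0} = 0`. -/
noncomputable def esymAt {s : ℕ} (n : Fin s → ℕ) (l : Fin s) (i : ℕ) : ℝ :=
  if i = 0 then 0
  else (n l : ℝ) *
    ∑ t ∈ Finset.powersetCard (i - 1) (Finset.univ.erase l), ∏ j ∈ t, (n j : ℝ)

open scoped Classical in
lemma seidelMatrix_apply {V : Type*} [Fintype V] [DecidableEq V] (G : SimpleGraph V) (u v : V) :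
    seidelMatrix G u v = 1 - (if u = v then 1 else 0) - 2 * (if G.Adj u v then 1 else 0) := by
  simp only [seidelMatrix, two_nsmul, two_mul, Matrix.sub_apply, Matrix.add_apply, of_apply,
    Matrix.one_apply, adjMatrix_apply]

/-- The determinant of a diagonal matrix plus a rank-one matrix with constant rows. -/
lemma det_diagonal_add_const_rows {K : Type*} [Fintype K] [DecidableEq K] (d w : K → ℝ)
    (hd : ∀ p, d p ≠ 0) :
    (Matrix.of fun p q : K => (if p = q then d p else 0) + w q).det =
      (∏ p, d p) * (1 + ∑ p, w p / d p) := by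
  have h : (Matrix.of fun p q : K => (if p = q then d p else 0) + w q) =
      diagonal d * (1 + replicateCol Unit (fun p => (d p)⁻¹) * replicateRow Unit w) := by
    ext p q
    rw [diagonal_mul, Matrix.add_apply, Matrix.mul_apply]
    simp only [of_apply, replicateCol_apply, replicateRow_apply, univ_unique, sum_singleton,
      Matrix.one_apply, mul_add, mul_inv_cancel_left₀ (hd p), mul_ite, mul_one, mul_zero]
  rw [h, det_mul, det_diagonal, det_one_add_replicateCol_mul_replicateRow]
  simp only [dotProduct, div_eq_mul_inv]

/-- The Seidel characteristic polynomial of a complete multipartite graph, away from the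
zeros of the factors attached to its parts. -/
lemma eval_charpoly_seidelMatrix_completeMultipartiteGraph {K : Type*} [Fintype K] [DecidableEq K]
    (w : K → ℕ) (x : ℝ) (hx : x + 1 ≠ 0) (hw : ∀ p, x + 1 - 2 * (w p : ℝ) ≠ 0) :
    (x + 1) ^ Fintype.card K *
        (seidelMatrix (completeMultipartiteGraph fun p => Fin (w p))).charpoly.eval x =
      (x + 1) ^ (∑ p, w p) *
        ((∏ p, (x + 1 - 2 * (w p : ℝ))) * (1 + ∑ p, (w p : ℝ) / (x + 1 - 2 * (w p : ℝ)))) := by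
  let P : Matrix ((p : K) × Fin (w p)) K ℝ := Matrix.of fun v p => if v.1 = p then 1 else 0
  let B : Matrix K ((p : K) × Fin (w p)) ℝ :=
    Matrix.of fun p v => (x + 1)⁻¹ * (1 - if p = v.1 then 2 else 0)
  have hS : scalar ((p : K) × Fin (w p)) x -
      seidelMatrix (completeMultipartiteGraph fun p => Fin (w p)) = (x + 1) • (1 + P * B) := by
    ext u v
    have hPB : (P * B) u v = (x + 1)⁻¹ * (1 - if u.1 = v.1 then 2 else 0) := by
      simp [P, B, Matrix.mul_apply]
    rw [Matrix.smul_apply, Matrix.add_apply, hPB, smul_eq_mul, mul_add, mul_inv_cancel_left₀ hx]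
    by_cases huv : u = v
    · subst huv
      simp [seidelMatrix_apply]
      ring
    · by_cases h1 : u.1 = v.1
      · simp [seidelMatrix_apply, huv, h1]
        norm_num
      · simp [seidelMatrix_apply, huv, h1]
        norm_num
  have hBP : (x + 1) • (1 + B * P) =
      Matrix.of fun p q : K => (if p = q then x + 1 - 2 * (w p : ℝ) else 0) + w q := by
    ext p q
    have h : (B * P) p q = (x + 1)⁻¹ * ((1 - if p = q then 2 else 0) * w q) := by
      simp only [P, B, Matrix.mul_apply, of_apply, Fintype.sum_sigma]
      rw [Finset.sum_eq_single q]
      · by_cases hpq : p = q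
        · simp [hpq]
          ring
        · simp [hpq]
          ring
      · intro b _ hb
        simp [hb]
      · simp
    rw [Matrix.smul_apply, Matrix.add_apply, h, smul_eq_mul, mul_add, mul_inv_cancel_left₀ hx]
    by_cases hpq : p = q
    · subst hpq
      simp
      ring
    · simp [hpq]
  rw [Matrix.eval_charpoly, hS, det_smul, det_one_add_mul_comm, mul_left_comm, ← det_smul, hBP,
    det_diagonal_add_const_rows _ _ hw]
  simp

lemma prod_sub_two_mul_eq_sum {ι : Type*} [DecidableEq ι] (S : Finset ι) (a : ι → ℝ) (y : ℝ) :
    ∏ j ∈ S, (y - 2 * a j) =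
      ∑ i ∈ Finset.range (#S + 1),
        (-2) ^ i * (∑ t ∈ Finset.powersetCard i S, ∏ j ∈ t, a j) * y ^ (#S - i) := by
  have h : ∀ j ∈ S, y - 2 * a j = -2 * a j + y := fun j _ => by ring
  rw [Finset.prod_congr rfl h, Finset.prod_add, Finset.sum_powerset]
  refine Finset.sum_congr rfl fun i _ => ?_
  rw [Finset.mul_sum, Finset.sum_mul]
  refine Finset.sum_congr rfl fun t ht => ?_
  obtain ⟨hts, hti⟩ := Finset.mem_powersetCard.1 ht
  rw [Finset.prod_mul_distrib, Finset.prod_const, Finset.prod_const,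
    Finset.card_sdiff_of_subset hts, hti]

lemma prod_sub_eq_sum_esym {s : ℕ} (n : Fin s → ℕ) (y : ℝ) :
    ∏ j, (y - 2 * (n j : ℝ)) =
      ∑ i ∈ Finset.range (s + 1), (-2) ^ i * esym n i * y ^ (s - i) := by
  simp [prod_sub_two_mul_eq_sum, esym]

lemma mul_prod_erase_eq_sum_esymAt {s : ℕ} (n : Fin s → ℕ) (l : Fin s) (y : ℝ) :
    (n l : ℝ) * ∏ j ∈ Finset.univ.erase l, (y - 2 * (n j : ℝ)) =
      ∑ i ∈ Finset.range (s + 1), (-2) ^ ((i : ℤ) - 1) * esymAt n l i * y ^ (s - i) := by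
  have hs : 0 < s := l.pos
  rw [prod_sub_two_mul_eq_sum, Finset.card_erase_of_mem (Finset.mem_univ l), Finset.card_univ,
    Fintype.card_fin, Nat.sub_add_cancel hs, Finset.sum_range_succ' _ s, Finset.mul_sum]
  simp only [esymAt, if_true, mul_zero, zero_mul, add_zero, Nat.succ_ne_zero, if_false,
    Nat.add_sub_cancel]
  refine Finset.sum_congr rfl fun i _ => ?_
  rw [Nat.cast_succ, add_sub_cancel_right, zpow_natCast, Nat.sub_sub, Nat.add_comm 1 i]
  ring

/-- Collecting powers of `x` in a combination of powers of `x + 1`. -/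
lemma sum_mul_add_one_pow (s : ℕ) (c : ℕ → ℝ) (x : ℝ) :
    ∑ i ∈ Finset.range (s + 1), c i * (x + 1) ^ (s - i) =
      ∑ m ∈ Finset.range (s + 1),
        (∑ i ∈ Finset.range (m + 1), c i * ((s - i).choose (m - i) : ℝ)) * x ^ (s - m) := by
  have h : ∀ i ∈ Finset.range (s + 1), c i * (x + 1) ^ (s - i) =
      ∑ m ∈ Finset.Icc i s, c i * ((s - i).choose (m - i) : ℝ) * x ^ (s - m) := by
    intro i hi
    have hi' : i ≤ s := Nat.lt_succ_iff.1 (Finset.mem_range.1 hi)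
    rw [add_comm x 1, add_pow, Finset.mul_sum]
    refine Finset.sum_bij' (fun k _ => k + i) (fun m _ => m - i) ?_ ?_ ?_ ?_ ?_
    · intro k hk
      simp only [Finset.mem_range, Finset.mem_Icc] at hk ⊢
      omega
    · intro m hm
      simp only [Finset.mem_range, Finset.mem_Icc] at hm ⊢
      omega
    · intro k _
      simp
    · intro m hm
      simp only [Finset.mem_Icc] at hm
      omega
    · intro k _
      rw [one_pow, one_mul, Nat.add_sub_cancel, Nat.sub_sub, Nat.add_comm i k]
      ring
  rw [Finset.sum_congr rfl h]
  simp only [Finset.sum_mul]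
  refine Finset.sum_comm' fun i m => ?_
  simp only [Finset.mem_range, Finset.mem_Icc]
  omega

/-- **Theorem (coefficients of the Seidel characteristic polynomial of
`K_{r_1·n_1,…,r_s·n_s}`).** For the complete multipartite graph with exactly `r i`
parts of size `n i` (`n i` pairwise distinct), order `N = ∑ i, r i * n i` and
`k = ∑ i, r i` parts,
`S_G(λ) = (λ+1)^{N-k} ∏_i (λ+1-2n_i)^{r_i-1} (λ^s +
  ∑_{m=1}^{s} ∑_{i=0}^{m} (-1)^{i-1} 2^{i-1} C(s-i,m-i) (∑_l r_l σ_{l,i} - 2σ_i) λ^{s-m})`. -/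
theorem seidel_charpoly_coeffs_mult (s : ℕ) (r n : Fin s → ℕ)
    (hr : ∀ i, 1 ≤ r i) (hn : ∀ i, 1 ≤ n i) (hdist : Function.Injective n) :
    (seidelMatrix (completeMultipartiteGraph
        fun p : (i : Fin s) × Fin (r i) => Fin (n p.1))).charpoly =
      (X + 1) ^ ((∑ i, r i * n i) - ∑ i, r i) *
        (∏ i, (X + 1 - 2 * (n i : ℝ[X])) ^ (r i - 1)) *
        (X ^ s +
          ∑ m ∈ Finset.Icc 1 s,
            C (∑ i ∈ Finset.range (m + 1),
                (-1 : ℝ) ^ ((i : ℤ) - 1) * (2 : ℝ) ^ ((i : ℤ) - 1) *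
                  ((s - i).choose (m - i) : ℝ) *
                  ((∑ l, (r l : ℝ) * esymAt n l i) - 2 * esym n i)) *
              X ^ (s - m)) := by
  classical
  refine Polynomial.eq_of_infinite_eval_eq _ _
    ((Set.Ioi_infinite (2 * ∑ i, (n i : ℝ))).mono fun x hx => ?_)
  have hx0 : 0 < x := lt_of_le_of_lt (by positivity) hx
  have hx1 : x + 1 ≠ 0 := by positivity
  have hlt : ∀ i, x + 1 - 2 * (n i : ℝ) ≠ 0 := by
    intro i
    have h := Finset.single_le_sum (f := fun i => (n i : ℝ)) (fun _ _ => by positivity)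
      (Finset.mem_univ i)
    have hx' : 2 * ∑ i, (n i : ℝ) < x := hx
    exact ne_of_gt (by linarith)
  have hsum : ∑ p : (i : Fin s) × Fin (r i), n p.1 = ∑ i, r i * n i := by
    simp [Fintype.sum_sigma]
  have hle : ∑ i, r i ≤ ∑ i, r i * n i :=
    Finset.sum_le_sum fun i _ => Nat.le_mul_of_pos_right _ (hn i)
  have key := eval_charpoly_seidelMatrix_completeMultipartiteGraph
    (fun p : (i : Fin s) × Fin (r i) => n p.1) x hx1 fun p => hlt p.1
  have hcard : Fintype.card ((i : Fin s) × Fin (r i)) = ∑ i, r i := by simp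
  rw [hsum, hcard, ← Nat.add_sub_cancel' hle, pow_add, mul_assoc] at key
  rw [Set.mem_ofPred_eq]
  have key' := mul_left_cancel₀ (pow_ne_zero _ hx1) key
  rw [key']
  have hprod : ∏ p : (i : Fin s) × Fin (r i), (x + 1 - 2 * (n p.1 : ℝ)) =
      (∏ i, (x + 1 - 2 * (n i : ℝ)) ^ (r i - 1)) * ∏ i, (x + 1 - 2 * (n i : ℝ)) := by
    rw [Fintype.prod_sigma, ← Finset.prod_mul_distrib]
    refine Finset.prod_congr rfl fun i _ => ?_
    dsimp only
    rw [Finset.prod_const, Finset.card_univ, Fintype.card_fin, ← pow_succ,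
      Nat.sub_add_cancel (hr i)]
  have hfrac : ∑ p : (i : Fin s) × Fin (r i), (n p.1 : ℝ) / (x + 1 - 2 * (n p.1 : ℝ)) =
      ∑ l, (r l : ℝ) * ((n l : ℝ) / (x + 1 - 2 * (n l : ℝ))) := by
    simp [Fintype.sum_sigma]
  rw [hprod, hfrac]
  have hquot : (∏ i, (x + 1 - 2 * (n i : ℝ))) *
      (1 + ∑ l, (r l : ℝ) * ((n l : ℝ) / (x + 1 - 2 * (n l : ℝ)))) =
      ∑ i ∈ Finset.range (s + 1), (-2 : ℝ) ^ ((i : ℤ) - 1) *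
        ((∑ l, (r l : ℝ) * esymAt n l i) - 2 * esym n i) * (x + 1) ^ (s - i) := by
    have hl : ∀ l, (∏ i, (x + 1 - 2 * (n i : ℝ))) *
        ((r l : ℝ) * ((n l : ℝ) / (x + 1 - 2 * (n l : ℝ)))) =
        r l * ∑ i ∈ Finset.range (s + 1),
          (-2) ^ ((i : ℤ) - 1) * esymAt n l i * (x + 1) ^ (s - i) := by
      intro l
      rw [← mul_prod_erase_eq_sum_esymAt, ← Finset.mul_prod_erase _ _ (Finset.mem_univ l)]
      have := hlt l
      field_simp
    rw [mul_add, mul_one, Finset.mul_sum, Finset.sum_congr rfl fun l _ => hl l,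
      prod_sub_eq_sum_esym]
    simp only [Finset.mul_sum]
    rw [Finset.sum_comm, ← Finset.sum_add_distrib]
    refine Finset.sum_congr rfl fun i _ => ?_
    have h2 : (-2 : ℝ) ^ i = (-2) ^ ((i : ℤ) - 1) * (-2) := by
      rw [← zpow_add_one₀ (by norm_num), sub_add_cancel, zpow_natCast]
    rw [h2, mul_sub, sub_mul, Finset.mul_sum, Finset.sum_mul, sub_eq_add_neg, add_comm]
    congr 1
    · exact Finset.sum_congr rfl fun l _ => by ring
    · ring
  have hfactor : (∏ i, (x + 1 - 2 * (n i : ℝ))) *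
      (1 + ∑ l, (r l : ℝ) * ((n l : ℝ) / (x + 1 - 2 * (n l : ℝ)))) =
      x ^ s + ∑ m ∈ Finset.Icc 1 s,
        (∑ i ∈ Finset.range (m + 1),
          (-1 : ℝ) ^ ((i : ℤ) - 1) * (2 : ℝ) ^ ((i : ℤ) - 1) * ((s - i).choose (m - i) : ℝ) *
            ((∑ l, (r l : ℝ) * esymAt n l i) - 2 * esym n i)) * x ^ (s - m) := by
    rw [hquot, sum_mul_add_one_pow, Finset.range_eq_Ico, Finset.sum_eq_sum_Ico_succ_bot (by omega)]
    congr 1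
    · simp [esymAt, esym]
    · refine Finset.sum_congr rfl fun m _ => ?_
      congr 1
      refine Finset.sum_congr rfl fun i _ => ?_
      rw [← mul_zpow, neg_one_mul]
      ring
  rw [mul_assoc (∏ i, _), hfactor, ← mul_assoc]
  simp [eval_prod, eval_finsetSum]
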